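/- There exist a recursively enumerable set A ⊆ ℕ with characteristic sequence ζ and a constant c such that C(ζ_{1:n}) ≥ 2·log n − c for infinitely many n. -/

import Mathlib

/-!
Work on dyadic blocks `J = [2^(K+1), 2^(K+2))`, one for each `K`, and ask for a prefix of length in
`J` with complexity at least `2K`; since that length is below `2^(K+2)` this costs only `c = 4`.
Call the pair `(n, m)`, with `n, m ∈ J`, *hit* if some program of length less than `2K` outputs a
string of length `n` whose part inside the block is zero on positions up to `m` and one on positions
above `m` (nothing is demanded of the part before the block, so the blocks do not interact).
Enumerate `J` into `A` from the right: put `j` into `A` as soon as every pair `(n, m)` with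
`j ≤ m` has been hit. Being hit is recursively enumerable, hence so is `A`.

Some element of `J` stays outside `A`: otherwise all pairs are hit, but the `4^K` pairs with `m` in
the left half of `J` and `n` in the right half need different programs, and there are only
`4^K - 1` programs of length less than `2K` (`exists_notMem_block`). Let `m` be the largest element
of `J` outside `A`. Then `A ∩ J` consists of the elements of `J` above `m`, so every prefix of the
characteristic sequence of length `n ∈ J` has the shape asked for in `(n, m)` (`pref_mod`). As `m`
was not enumerated, some `(n, m)` is never hit, so the prefix of that length `n` has
complexity at least `2K`.
-/


open Filter Set

/-- The length of the binary string identified with the natural number `x` under the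
length-increasing lexicographic pairing (`ε ↔ 0`, `0 ↔ 1`, `1 ↔ 2`, `00 ↔ 3`, `01 ↔ 4`, …). -/
def strLen (x : ℕ) : ℕ := Nat.log2 (x + 1)

/-- The universal machine `U`: run the partial recursive code encoded by the
binary string `p` on input `y`. -/
def univ (p y : ℕ) : Part ℕ :=
  Nat.Partrec.Code.eval (Denumerable.ofNat Nat.Partrec.Code p) y

/-- The conditional Kolmogorov complexity `C(x|y)`: the minimum length of a
binary string `p` with `U(p,y) = x`. -/
noncomputable def KC (x y : ℕ) : ℕ :=
  sInf {L | ∃ p, strLen p = L ∧ x ∈ univ p y}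

/-- The step-bounded universal machine: `p` on input `y` outputs `x`
within `t(|x|)` computation steps. -/
def univBounded (t : ℕ → ℕ) (p y x : ℕ) : Prop :=
  x ∈ Nat.Partrec.Code.evaln (t (strLen x)) (Denumerable.ofNat Nat.Partrec.Code p) y

/-- The time-bounded conditional Kolmogorov complexity `C^t(x|y)`: the minimum
length of a binary string `p` with `U(p,y) = x` within `t(|x|)` steps
(`⊤` if no program succeeds within the time bound). -/
noncomputable def KCt (t : ℕ → ℕ) (x y : ℕ) : ℕ∞ :=
  sInf {L : ℕ∞ | ∃ p, (strLen p : ℕ∞) = L ∧ univBounded t p y x}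

/-- The natural number encoding (under the length-increasing lexicographic pairing)
of the string `ω₁ω₂…ωₙ` of the first `n` bits of the infinite binary sequence `ω`
(where `ω i` is bit `ω_{i+1}`). -/
def prefEncode (ω : ℕ → Bool) : ℕ → ℕ
  | 0 => 0
  | n + 1 => 2 * prefEncode ω n + (if ω n then 1 else 0) + 1

/-- A set `A ⊆ ℕ` is recursively enumerable if it is the domain of a partial
computable function. -/
def isRE (A : Set ℕ) : Prop := ∃ f : ℕ →. ℕ, Partrec f ∧ ∀ x, x ∈ A ↔ (f x).Dom

open Classical in
/-- The characteristic sequence `χ = χ₁χ₂…` of `A ⊆ ℕ`: `χᵢ = 1` iff `i ∈ A`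
(as a function `ℕ → Bool`, `chi A i` is bit `χ_{i+1}`). -/
noncomputable def chi (A : Set ℕ) : ℕ → Bool := fun i => if (i + 1) ∈ A then true else false

/-- `HitAt s K n m`: within `s` steps some program of length less than `2 * K` outputs (on the
empty input) a string of length `n` whose bits in positions `2^(K+1), …, n` are zero up to position
`m` and one afterwards. The string `x` is read off from `x + 1`, whose binary expansion is a leading
one followed by the bits of the string; so the length condition is `2^n ≤ x + 1 < 2^(n+1)`, and the
last `n + 1 - 2^(K+1)` bits are a residue. The default output `0` (the empty string) of a program
that has not halted is harmless, since its length is `0`. -/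
def HitAt (s K n m : ℕ) : Prop :=
  ∃ p < 4 ^ K - 1,
    2 ^ n ≤ (Nat.Partrec.Code.evaln s (Denumerable.ofNat Nat.Partrec.Code p) 0).getD 0 + 1 ∧
    (Nat.Partrec.Code.evaln s (Denumerable.ofNat Nat.Partrec.Code p) 0).getD 0 + 1 < 2 ^ (n + 1) ∧
    ((Nat.Partrec.Code.evaln s (Denumerable.ofNat Nat.Partrec.Code p) 0).getD 0 + 1)
      % 2 ^ (n + 1 - 2 ^ (K + 1)) = 2 ^ (n - m) - 1

/-- By stage `s` all pairs `(n, m)` of the `K`-th block with `j ≤ m` have been hit. -/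
def Complete (s K j : ℕ) : Prop :=
  ∀ m < 2 ^ (K + 2), j ≤ m → ∀ n < 2 ^ (K + 2), 2 ^ (K + 1) ≤ n → HitAt s K n m

/-- The recursively enumerable set with prefixes of high complexity. -/
def kummerSet : Set ℕ :=
  {j | ∃ t : ℕ × ℕ, 2 ^ (t.2 + 1) ≤ j ∧ j < 2 ^ (t.2 + 2) ∧ Complete t.1 t.2 j}

/-! ### Enumerability -/

lemma primrec_pow : Primrec₂ ((· ^ ·) : ℕ → ℕ → ℕ) :=
  Primrec₂.unpaired'.1 Nat.Primrec.pow

lemma primrec_two_pow {α : Type*} [Primcodable α] {f : α → ℕ} (hf : Primrec f) :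
    Primrec fun a => 2 ^ f a :=
  primrec_pow.comp (Primrec.const 2) hf

lemma primrecRel_exists_lt {β : Type*} [Primcodable β] {R : ℕ → β → Prop} (hR : PrimrecRel R) :
    PrimrecRel fun (n : ℕ) b => ∃ x < n, R x b :=
  (PrimrecRel.comp hR.exists_mem_list (Primrec.list_range.comp Primrec.fst) Primrec.snd).of_eq
    fun _ => by simp

lemma primrecRel_forall_lt {β : Type*} [Primcodable β] {R : ℕ → β → Prop} (hR : PrimrecRel R) :
    PrimrecRel fun (n : ℕ) b => ∀ x < n, R x b :=
  (PrimrecRel.comp hR.forall_mem_list (Primrec.list_range.comp Primrec.fst) Primrec.snd).of_eq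
    fun _ => by simp

lemma hitAt_primrec : PrimrecPred fun q : (ℕ × ℕ) × (ℕ × ℕ) => HitAt q.1.1 q.1.2 q.2.1 q.2.2 := by
  have ev : Primrec fun a : ℕ × ((ℕ × ℕ) × (ℕ × ℕ)) =>
      (Nat.Partrec.Code.evaln a.2.1.1 (Denumerable.ofNat Nat.Partrec.Code a.1) 0).getD 0 + 1 := by
    refine Primrec.succ.comp (Primrec.option_getD.comp ?_ (Primrec.const 0))
    exact Nat.Partrec.Code.primrec_evaln.comp
      (((Primrec.fst.comp (Primrec.fst.comp Primrec.snd)).pair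
        ((Primrec.ofNat _).comp Primrec.fst)).pair (Primrec.const 0))
  have hK : Primrec fun a : ℕ × ((ℕ × ℕ) × (ℕ × ℕ)) => a.2.1.2 :=
    Primrec.snd.comp (Primrec.fst.comp Primrec.snd)
  have hn : Primrec fun a : ℕ × ((ℕ × ℕ) × (ℕ × ℕ)) => a.2.2.1 :=
    Primrec.fst.comp (Primrec.snd.comp Primrec.snd)
  have hm : Primrec fun a : ℕ × ((ℕ × ℕ) × (ℕ × ℕ)) => a.2.2.2 :=
    Primrec.snd.comp (Primrec.snd.comp Primrec.snd)
  have h1 := Primrec.nat_le.comp (primrec_two_pow hn) ev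
  have h2 := Primrec.nat_lt.comp ev (primrec_two_pow (Primrec.succ.comp hn))
  have h3 := Primrec.eq.comp
    (Primrec.nat_mod.comp ev (primrec_two_pow (Primrec.nat_sub.comp (Primrec.succ.comp hn)
      (primrec_two_pow (Primrec.succ.comp hK)))))
    (Primrec.nat_sub.comp (primrec_two_pow (Primrec.nat_sub.comp hn hm)) (Primrec.const 1))
  have hR : PrimrecRel fun (p : ℕ) (q : (ℕ × ℕ) × (ℕ × ℕ)) =>
      2 ^ q.2.1 ≤ (Nat.Partrec.Code.evaln q.1.1 (Denumerable.ofNat _ p) 0).getD 0 + 1 ∧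
      (Nat.Partrec.Code.evaln q.1.1 (Denumerable.ofNat _ p) 0).getD 0 + 1 < 2 ^ (q.2.1 + 1) ∧
      ((Nat.Partrec.Code.evaln q.1.1 (Denumerable.ofNat _ p) 0).getD 0 + 1)
        % 2 ^ (q.2.1 + 1 - 2 ^ (q.1.2 + 1)) = 2 ^ (q.2.1 - q.2.2) - 1 := h1.and (h2.and h3)
  have hK' : Primrec fun q : (ℕ × ℕ) × (ℕ × ℕ) => 4 ^ q.1.2 - 1 :=
    Primrec.nat_sub.comp
      (primrec_pow.comp (Primrec.const 4) (Primrec.snd.comp Primrec.fst)) (Primrec.const 1)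
  have hE := primrecRel_exists_lt hR
  exact PrimrecRel.comp hE hK' Primrec.id

lemma complete_primrec : PrimrecPred fun q : ℕ × (ℕ × ℕ) => Complete q.2.1 q.2.2 q.1 := by
  have b1 : PrimrecRel fun (n : ℕ) (q : ℕ × (ℕ × (ℕ × ℕ))) =>
      2 ^ (q.2.2.2 + 1) ≤ n → HitAt q.2.2.1 q.2.2.2 n q.1 := by
    have e1 : PrimrecPred fun a : ℕ × (ℕ × (ℕ × (ℕ × ℕ))) => 2 ^ (a.2.2.2.2 + 1) ≤ a.1 :=
      Primrec.nat_le.comp (primrec_two_pow (Primrec.succ.comp (Primrec.snd.comp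
        (Primrec.snd.comp (Primrec.snd.comp Primrec.snd))))) Primrec.fst
    have e2 : PrimrecPred fun a : ℕ × (ℕ × (ℕ × (ℕ × ℕ))) =>
        HitAt a.2.2.2.1 a.2.2.2.2 a.1 a.2.1 :=
      hitAt_primrec.comp ((Primrec.snd.comp (Primrec.snd.comp Primrec.snd)).pair
        (Primrec.fst.pair (Primrec.fst.comp Primrec.snd)))
    exact (e1.not.or e2).of_eq fun a => by tauto
  have b1' := primrecRel_forall_lt b1
  have b2 : PrimrecRel fun (m : ℕ) (q : ℕ × (ℕ × ℕ)) =>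
      q.1 ≤ m → ∀ n < 2 ^ (q.2.2 + 2), 2 ^ (q.2.2 + 1) ≤ n → HitAt q.2.1 q.2.2 n m := by
    have e1 : PrimrecPred fun a : ℕ × (ℕ × (ℕ × ℕ)) => a.2.1 ≤ a.1 :=
      Primrec.nat_le.comp (Primrec.fst.comp Primrec.snd) Primrec.fst
    have e2 : PrimrecPred fun a : ℕ × (ℕ × (ℕ × ℕ)) => ∀ n < 2 ^ (a.2.2.2 + 2),
        2 ^ (a.2.2.2 + 1) ≤ n → HitAt a.2.2.1 a.2.2.2 n a.1 :=
      PrimrecRel.comp b1' (primrec_two_pow (Primrec.succ.comp (Primrec.succ.comp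
        (Primrec.snd.comp (Primrec.snd.comp Primrec.snd))))) Primrec.id
    exact (e1.not.or e2).of_eq fun a => by tauto
  have b2' := primrecRel_forall_lt b2
  exact PrimrecRel.comp b2' (primrec_two_pow (Primrec.succ.comp (Primrec.succ.comp
    (Primrec.snd.comp Primrec.snd)))) Primrec.id

lemma kummerSet_isRE : isRE kummerSet := by
  classical
  have hP : PrimrecPred fun q : ℕ × (ℕ × ℕ) =>
      2 ^ (q.2.2 + 1) ≤ q.1 ∧ q.1 < 2 ^ (q.2.2 + 2) ∧ Complete q.2.1 q.2.2 q.1 := by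
    refine (Primrec.nat_le.comp (primrec_two_pow (Primrec.succ.comp
      (Primrec.snd.comp Primrec.snd))) Primrec.fst).and
      ((Primrec.nat_lt.comp Primrec.fst (primrec_two_pow (Primrec.succ.comp (Primrec.succ.comp
      (Primrec.snd.comp Primrec.snd))))).and complete_primrec)
  have hP' := hP.comp (Primrec.fst.pair (Primrec.unpair.comp Primrec.snd) :
    Primrec fun a : ℕ × ℕ => (a.1, Nat.unpair a.2))
  refine ⟨fun x => Nat.rfind fun t => Part.some (decide (2 ^ ((Nat.unpair t).2 + 1) ≤ x ∧
    x < 2 ^ ((Nat.unpair t).2 + 2) ∧ Complete (Nat.unpair t).1 (Nat.unpair t).2 x)),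
    Partrec.rfind (ComputablePred.decide hP'.computablePred).partrec.to₂, fun x => ?_⟩
  refine Iff.trans ?_ Nat.rfind_dom.symm
  constructor
  · rintro ⟨t, ht⟩
    refine ⟨Nat.pair t.1 t.2, ?_, fun _ => trivial⟩
    simpa using ht
  · rintro ⟨t, ht, -⟩
    exact ⟨Nat.unpair t, by simpa using ht⟩

/-! ### Block structure of the set -/

lemma HitAt.mono {s s' K n m : ℕ} (hn : 1 ≤ n) (hs : s ≤ s') (h : HitAt s K n m) :
    HitAt s' K n m := by
  obtain ⟨p, hp, h⟩ := h
  refine ⟨p, hp, ?_⟩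
  rcases hx : Nat.Partrec.Code.evaln s (Denumerable.ofNat Nat.Partrec.Code p) 0 with _ | x
  · have := Nat.one_lt_two_pow (n := n) (by omega)
    rw [hx] at h
    simp at h
    omega
  · have h2 := Nat.Partrec.Code.evaln_mono hs (show x ∈ _ from hx)
    rw [Option.mem_def] at h2
    rw [hx] at h
    rwa [h2]

/-- Stages at which the finitely many pairs of the block are hit can be chosen uniformly, because
being hit is monotone in the stage. -/
lemma mem_kummerSet_of_forall {K j : ℕ} (h1 : 2 ^ (K + 1) ≤ j) (h2 : j < 2 ^ (K + 2))
    (h : ∀ m < 2 ^ (K + 2), j ≤ m → ∀ n < 2 ^ (K + 2), 2 ^ (K + 1) ≤ n → ∃ s, HitAt s K n m) :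
    j ∈ kummerSet := by
  have key : ∀ᶠ s in atTop, ∀ m ∈ Set.Iio (2 ^ (K + 2)), ∀ n ∈ Set.Iio (2 ^ (K + 2)),
      j ≤ m → 2 ^ (K + 1) ≤ n → HitAt s K n m := by
    rw [Filter.eventually_all_finite (Set.finite_Iio _)]
    intro m hm
    rw [Filter.eventually_all_finite (Set.finite_Iio _)]
    intro n hn
    by_cases hj : j ≤ m ∧ 2 ^ (K + 1) ≤ n
    · obtain ⟨s, hs⟩ := h m hm hj.1 n hn hj.2
      filter_upwards [eventually_ge_atTop s] with s' hs' _ _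
      exact hs.mono (le_trans Nat.one_le_two_pow hj.2) hs'
    · exact Eventually.of_forall fun s a b => absurd ⟨a, b⟩ hj
  obtain ⟨s, hs⟩ := key.exists
  exact ⟨(s, K), h1, h2, fun m hm hj n hn hle => hs m hm n hn hj hle⟩

/-- An element of the `K`-th block can only have been enumerated on account of that block. -/
lemma complete_of_mem {K j : ℕ} (h1 : 2 ^ (K + 1) ≤ j) (h2 : j < 2 ^ (K + 2))
    (h : j ∈ kummerSet) : ∃ s, Complete s K j := by
  obtain ⟨⟨s, K'⟩, h3, h4, h5⟩ := h
  have a := (Nat.pow_lt_pow_iff_right (by norm_num : 1 < 2)).1 (h1.trans_lt h4)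
  have b := (Nat.pow_lt_pow_iff_right (by norm_num : 1 < 2)).1 (h3.trans_lt h2)
  dsimp only at a b
  obtain rfl : K = K' := by omega
  exact ⟨s, h5⟩

/-- Counting: the block cannot be exhausted, since the `4^K` pairs `(2^(K+1) + 2^K + a, 2^(K+1) + b)`
with `a, b < 2^K` cannot all be hit by the `4^K - 1` available programs. -/
lemma exists_notMem_block (K : ℕ) : ∃ j, 2 ^ (K + 1) ≤ j ∧ j < 2 ^ (K + 2) ∧ j ∉ kummerSet := by
  by_contra! hall
  have e1 : 2 ^ (K + 1) = 2 * 2 ^ K := by ring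
  have e2 : 2 ^ (K + 2) = 4 * 2 ^ K := by ring
  have hpos : 0 < 2 ^ K := Nat.two_pow_pos K
  obtain ⟨s, hs⟩ := complete_of_mem le_rfl (by omega) (hall (2 ^ (K + 1)) le_rfl (by omega))
  have hit : ∀ q ∈ Finset.range (2 ^ K) ×ˢ Finset.range (2 ^ K),
      HitAt s K (3 * 2 ^ K + q.1) (2 * 2 ^ K + q.2) := by
    intro q hq
    simp only [Finset.mem_product, Finset.mem_range] at hq
    exact hs _ (by omega) (by omega) _ (by omega) (by omega)
  choose! P hP hP1 hP2 hP3 using hit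
  obtain ⟨q, hq, q', hq', hne, heq⟩ := Finset.exists_ne_map_eq_of_card_lt_of_maps_to
    (s := Finset.range (2 ^ K) ×ˢ Finset.range (2 ^ K)) (t := Finset.range (4 ^ K - 1)) (f := P)
    (by
      have : 4 ^ K = 2 ^ K * 2 ^ K := by rw [← mul_pow]; norm_num
      have : 0 < 4 ^ K := by positivity
      simp only [Finset.card_product, Finset.card_range]
      omega)
    (fun q hq => by simpa using hP q hq)
  have u1 := hP1 q hq
  have u2 := hP2 q hq
  have u3 := hP3 q hq
  rw [heq] at u1 u2 u3
  have a := (Nat.pow_lt_pow_iff_right (by norm_num : 1 < 2)).1 (u1.trans_lt (hP2 q' hq'))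
  have b := (Nat.pow_lt_pow_iff_right (by norm_num : 1 < 2)).1 ((hP1 q' hq').trans_lt u2)
  have hfst : q.1 = q'.1 := by omega
  have v3 := hP3 q' hq'
  rw [← hfst, u3] at v3
  have w1 := Nat.two_pow_pos (3 * 2 ^ K + q.1 - (2 * 2 ^ K + q.2))
  have w2 := Nat.two_pow_pos (3 * 2 ^ K + q.1 - (2 * 2 ^ K + q'.2))
  have hexp := Nat.pow_right_injective (le_refl 2)
    (show 2 ^ (3 * 2 ^ K + q.1 - (2 * 2 ^ K + q.2))
      = 2 ^ (3 * 2 ^ K + q.1 - (2 * 2 ^ K + q'.2)) by omega)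
  simp only [Finset.mem_product, Finset.mem_range] at hq hq'
  exact hne (Prod.ext hfst (by omega))

/-! ### Prefixes of the characteristic sequence -/

lemma pref_bounds (ω : ℕ → Bool) (n : ℕ) :
    2 ^ n ≤ prefEncode ω n + 1 ∧ prefEncode ω n + 1 < 2 ^ (n + 1) := by
  induction n with
  | zero => simp [prefEncode]
  | succ n ih =>
    rw [prefEncode, pow_succ 2 (n + 1), pow_succ 2 n] at *
    split_ifs <;> omega

/-- If the bits in positions `a + 1, …, a + d` are zero up to position `m` and one afterwards, then
the last `d` bits of the prefix of length `a + d` form the number `2^(a + d - m) - 1`. -/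
lemma pref_mod (A : Set ℕ) (a m d : ℕ) (ha : a ≤ m)
    (h0 : ∀ i, a < i → i ≤ m → i ∉ A) (h1 : ∀ i, m < i → i ≤ a + d → i ∈ A) :
    (prefEncode (chi A) (a + d) + 1) % 2 ^ d = 2 ^ (a + d - m) - 1 := by
  induction d with
  | zero => simp [Nat.mod_one, Nat.sub_eq_zero_of_le ha]
  | succ d ih =>
    have ih := ih fun i hi hi' => h1 i hi (by omega)
    have hstep : ∀ e b N : ℕ, b < 2 → (2 * e + b) % (2 * N) = 2 * (e % N) + b := by
      intro e b N hb
      rw [Nat.mod_mul]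
      have : (2 * e + b) / 2 = e := by omega
      rw [this]
      omega
    rw [← add_assoc, prefEncode, pow_succ']
    by_cases hm : a + d + 1 ≤ m
    · have hb : chi A (a + d) = false := by simp [chi, h0 (a + d + 1) (by omega) hm]
      have := hstep (prefEncode (chi A) (a + d) + 1) 0 (2 ^ d) (by norm_num)
      rw [ih, Nat.sub_eq_zero_of_le (show a + d ≤ m by omega)] at this
      rw [hb, Nat.sub_eq_zero_of_le hm]
      simpa [mul_add, add_assoc] using this
    · have hb : chi A (a + d) = true := by
        simp [chi, h1 (a + d + 1) (by omega) (by omega)]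
      have := hstep (prefEncode (chi A) (a + d) + 1) 1 (2 ^ d) (by norm_num)
      rw [ih] at this
      rw [hb, show a + d + 1 - m = (a + d - m) + 1 by omega, pow_succ]
      have hpos := Nat.two_pow_pos (a + d - m)
      rw [if_pos rfl, show 2 * prefEncode (chi A) (a + d) + 1 + 1 + 1
        = 2 * (prefEncode (chi A) (a + d) + 1) + 1 by ring, this]
      omega

/-- A string of complexity below `2 * K` is output by a program among the first `4^K - 1`. Constant
programs show that the infimum defining the complexity is not over the empty set. -/
lemma exists_program_of_KC_lt {x K : ℕ} (h : KC x 0 < 2 * K) :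
    ∃ p < 4 ^ K - 1, x ∈ univ p 0 := by
  have hne : {L | ∃ p, strLen p = L ∧ x ∈ univ p 0}.Nonempty :=
    ⟨_, Encodable.encode (Nat.Partrec.Code.const x), rfl, by simp [_root_.univ]⟩
  obtain ⟨p, hp, hx⟩ := Nat.sInf_mem hne
  refine ⟨p, ?_, hx⟩
  change strLen p = KC x 0 at hp
  rw [← hp, strLen, Nat.log2_lt (by omega), pow_mul] at h
  norm_num at h
  omega

lemma exists_length_of_complex (K : ℕ) : ∃ n, 2 ^ (K + 1) ≤ n ∧ n < 2 ^ (K + 2) ∧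
    2 * K ≤ KC (prefEncode (chi kummerSet) n) 0 := by
  classical
  -- `m` is the largest element of the block that is not enumerated.
  obtain ⟨m, hm, hmax⟩ := Finset.exists_max_image
    ((Finset.Ico (2 ^ (K + 1)) (2 ^ (K + 2))).filter (· ∉ kummerSet)) id (by
      obtain ⟨j, h1, h2, h3⟩ := exists_notMem_block K
      exact ⟨j, by simp [h1, h2, h3]⟩)
  simp only [Finset.mem_filter, Finset.mem_Ico, id] at hm hmax
  obtain ⟨⟨hm1, hm2⟩, hmA⟩ := hm
  have habove : ∀ i, m < i → i < 2 ^ (K + 2) → i ∈ kummerSet := by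
    intro i hi hi'
    by_contra hc
    exact absurd (hmax i ⟨⟨by omega, hi'⟩, hc⟩) (by omega)
  have hbelow : ∀ i, 2 ^ (K + 1) - 1 < i → i ≤ m → i ∉ kummerSet := by
    intro i hi hi' hc
    obtain ⟨s, hs⟩ := complete_of_mem (K := K) (by omega) (by omega) hc
    exact hmA ⟨(s, K), hm1, hm2, fun m' h1 h2 => hs m' h1 (by omega)⟩
  have hmiss : ∃ n < 2 ^ (K + 2), 2 ^ (K + 1) ≤ n ∧ ∀ s, ¬ HitAt s K n m := by
    by_contra! hc
    refine hmA (mem_kummerSet_of_forall hm1 hm2 fun m' h1 h2 n h3 h4 => ?_)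
    rcases h2.eq_or_lt with rfl | h2
    · exact hc n h3 h4
    · obtain ⟨s, hs⟩ := complete_of_mem (by omega) h1 (habove m' h2 h1)
      exact ⟨s, hs m' h1 le_rfl n h3 h4⟩
  obtain ⟨n, hn2, hn1, hmiss⟩ := hmiss
  refine ⟨n, hn1, hn2, ?_⟩
  by_contra! hlt
  obtain ⟨p, hp, hx⟩ := exists_program_of_KC_lt hlt
  obtain ⟨s, hs⟩ := Nat.Partrec.Code.evaln_complete.1 hx
  rw [Option.mem_def] at hs
  refine hmiss s ⟨p, hp, ?_⟩
  rw [hs]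
  have hpos := Nat.two_pow_pos (K + 1)
  refine ⟨(pref_bounds _ n).1, (pref_bounds _ n).2, ?_⟩
  have := pref_mod kummerSet (2 ^ (K + 1) - 1) m (n + 1 - 2 ^ (K + 1)) (by omega) hbelow
    fun i hi hi' => habove i hi (by omega)
  rwa [show 2 ^ (K + 1) - 1 + (n + 1 - 2 ^ (K + 1)) = n by omega] at this

/-- Kummer: there are an r.e. set `A` with characteristic sequence `ζ` and a constant `c`
such that `C(ζ_{1:n}) ≥ 2 log n - c` for infinitely many `n`. -/
theorem stmt10 :
    ∃ A : Set ℕ, isRE A ∧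
      ∃ c : ℕ, ∃ᶠ n : ℕ in atTop,
        2 * Real.logb 2 n - c ≤ (KC (prefEncode (chi A) n) 0 : ℝ) := by
  refine ⟨kummerSet, kummerSet_isRE, 4, Filter.frequently_atTop.2 fun K => ?_⟩
  obtain ⟨n, h1, h2, h3⟩ := exists_length_of_complex K
  have hK : K < 2 ^ (K + 1) := (Nat.lt_succ_self K).trans Nat.lt_two_pow_self
  refine ⟨n, by omega, ?_⟩
  have hlog : Real.logb 2 n ≤ K + 2 := by
    rw [Real.logb_le_iff_le_rpow (by norm_num) (by exact_mod_cast (by omega : 0 < n))]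
    have : (n : ℝ) ≤ 2 ^ (K + 2) := by exact_mod_cast h2.le
    exact_mod_cast this
  have h3' : (2 * K : ℝ) ≤ KC (prefEncode (chi kummerSet) n) 0 := by exact_mod_cast h3
  push_cast
  linarith
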